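/- For every 1 ≤ i ≤ n²/2, j ∈ {0,1} and 0 ≤ h ≤ n²−2i, the map x ↦ x·E^h is injective on P_{2i,j}, and hence defines an isomorphism of left u-modules from P_{2i,j} onto the left ideal P_{2i,j}E^h := {x·E^h : x ∈ P_{2i,j}}. -/

import Mathlib

noncomputable section

open scoped TensorProduct

namespace QFL

/-- The defining relations of the quasi-Frobenius-Lusztig kernel `ũ_q(sl₂)`,
on the free algebra on four generators `K = ι 0`, `K̂ = ι 1`, `E = ι 2`, `F = ι 3`. -/
inductive Rel (k : Type) [Field k] (n : ℕ) (q : k) :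
    FreeAlgebra k (Fin 4) → FreeAlgebra k (Fin 4) → Prop
  | Kord : Rel k n q (FreeAlgebra.ι k (0 : Fin 4) ^ n) 1
  | Khord : Rel k n q (FreeAlgebra.ι k (1 : Fin 4) ^ n)
      ((FreeAlgebra.ι k (0 : Fin 4) ^ (n - 1)) ^ 2)
  | KKh : Rel k n q (FreeAlgebra.ι k (0 : Fin 4) * FreeAlgebra.ι k (1 : Fin 4))
      (FreeAlgebra.ι k (1 : Fin 4) * FreeAlgebra.ι k (0 : Fin 4))
  | KE : Rel k n q
      (FreeAlgebra.ι k (0 : Fin 4) * FreeAlgebra.ι k (2 : Fin 4) *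
        FreeAlgebra.ι k (0 : Fin 4) ^ (n - 1))
      (q ^ n • FreeAlgebra.ι k (2 : Fin 4))
  | KF : Rel k n q
      (FreeAlgebra.ι k (0 : Fin 4) * FreeAlgebra.ι k (3 : Fin 4) *
        FreeAlgebra.ι k (0 : Fin 4) ^ (n - 1))
      ((q ^ n)⁻¹ • FreeAlgebra.ι k (3 : Fin 4))
  | KhE : Rel k n q
      (FreeAlgebra.ι k (1 : Fin 4) * FreeAlgebra.ι k (2 : Fin 4) *
        FreeAlgebra.ι k (1 : Fin 4) ^ (n ^ 2 - 1))
      ((q ^ n * (q ^ 2)⁻¹) • FreeAlgebra.ι k (2 : Fin 4))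
  | KhF : Rel k n q
      (FreeAlgebra.ι k (1 : Fin 4) * FreeAlgebra.ι k (3 : Fin 4) *
        FreeAlgebra.ι k (1 : Fin 4) ^ (n ^ 2 - 1))
      (((q ^ n)⁻¹ * q ^ 2) • FreeAlgebra.ι k (3 : Fin 4))
  | Enil : Rel k n q (FreeAlgebra.ι k (2 : Fin 4) ^ n ^ 2) 0
  | Fnil : Rel k n q (FreeAlgebra.ι k (3 : Fin 4) ^ n ^ 2) 0
  | EF : Rel k n q
      (FreeAlgebra.ι k (3 : Fin 4) * FreeAlgebra.ι k (2 : Fin 4) -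
        q⁻¹ • (FreeAlgebra.ι k (2 : Fin 4) * FreeAlgebra.ι k (3 : Fin 4)))
      (1 - FreeAlgebra.ι k (0 : Fin 4) ^ (n - 1) * FreeAlgebra.ι k (1 : Fin 4))

/-- The algebra `ũ_q(sl₂)` as the quotient of the free algebra by the defining relations. -/
abbrev U (k : Type) [Field k] (n : ℕ) (q : k) := RingQuot (Rel k n q)

variable (k : Type) [Field k] (n : ℕ) (q : k)

def K : U k n q := RingQuot.mkAlgHom k (Rel k n q) (FreeAlgebra.ι k (0 : Fin 4))
def Kh : U k n q := RingQuot.mkAlgHom k (Rel k n q) (FreeAlgebra.ι k (1 : Fin 4))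
def E : U k n q := RingQuot.mkAlgHom k (Rel k n q) (FreeAlgebra.ι k (2 : Fin 4))
def F : U k n q := RingQuot.mkAlgHom k (Rel k n q) (FreeAlgebra.ι k (3 : Fin 4))

/-- `K⁻¹ = K^(n-1)`. -/
def Kinv : U k n q := K k n q ^ (n - 1)
/-- `K̂⁻¹ = K̂^(n²-1)`. -/
def Khinv : U k n q := Kh k n q ^ (n ^ 2 - 1)

/-- `φ_{2i} = (2/n²) Σ_{t<n²/2} q^{-2it} (K⁻¹K̂)^t`. -/
def phi (i : ℕ) : U k n q :=
  ((n ^ 2 : k)⁻¹ * 2) • ∑ t ∈ Finset.range (n ^ 2 / 2),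
    (q⁻¹ ^ (2 * i * t)) • (Kinv k n q * Kh k n q) ^ t

/-- `𝟙₀ = (1/2)(1 + KK̂^(n/2))` and `𝟙₁ = (1/2)(1 - KK̂^(n/2))`. -/
def oneJ (j : ℕ) : U k n q :=
  if j = 0 then (2 : k)⁻¹ • (1 + K k n q * Kh k n q ^ (n / 2))
  else (2 : k)⁻¹ • (1 - K k n q * Kh k n q ^ (n / 2))

/-- The idempotent `e_{2i,j} = φ_{2i} 𝟙_j`. -/
def eIdem (i j : ℕ) : U k n q := phi k n q i * oneJ k n q j

/-- `α_{2i,j} = F^(n²-1) e_{2i,j}`. -/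
def alpha (i j : ℕ) : U k n q := F k n q ^ (n ^ 2 - 1) * eIdem k n q i j

/-- `β_{2i,j} = E^(2i-2) α_{2i,j}`. -/
def beta (i j : ℕ) : U k n q := E k n q ^ (2 * i - 2) * alpha k n q i j

/-- The Gaussian number `s_q = 1 + q + ⋯ + q^(s-1)`. -/
def gauss (x : k) (s : ℕ) : k := ∑ t ∈ Finset.range s, x ^ t

/-- The span of the PBW-type monomials `F^a K^c K̂^d E^b` with `a ≤ n²-2`, `b ≤ n²-1`,
`c ≤ n-1`, `d ≤ n²-1`. -/
def pbw : Submodule k (U k n q) :=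
  Submodule.span k {x | ∃ a b c d : ℕ, a ≤ n ^ 2 - 2 ∧ b ≤ n ^ 2 - 1 ∧ c ≤ n - 1 ∧
    d ≤ n ^ 2 - 1 ∧ x = F k n q ^ a * K k n q ^ c * Kh k n q ^ d * E k n q ^ b}

/-- `γ_{2i,j}`: the unique element of the PBW span with `F·γ = β_{2i,j}`. -/
def gam (i j : ℕ) : U k n q :=
  @dite _ (∃! x, x ∈ pbw k n q ∧ F k n q * x = beta k n q i j)
    (Classical.propDecidable _) (fun h => h.choose) (fun _ => 0)

/-- The left ideal `P_{2i,j} = u·γ_{2i,j}`. -/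
def P (i j : ℕ) : Submodule (U k n q) (U k n q) :=
  Submodule.span (U k n q) {gam k n q i j}

/-- `S_{2i,j} = Soc(P_{2i,j})`, the sum of all simple submodules of `P_{2i,j}`. -/
def S (i j : ℕ) : Submodule (U k n q) (U k n q) :=
  sSup {N : Submodule (U k n q) (U k n q) | N ≤ P k n q i j ∧ IsSimpleModule (U k n q) N}

end QFL

/-!
Put `L = K⁻¹K̂`. The element `D = (1 - q) E F + q + q² L` commutes with `L` and satisfies
`D F = q F D`, so moving powers of `F` across the factors `f(u) = u D - q - q² u² L` shows that
`(1 - q)ᵖ Eᵖ Fᵖ` and `(1 - q)ᵖ Fᵖ Eᵖ` are the products of the `f(qᵗ)` over `0 ≤ t < p` and over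
`-p ≤ t < 0`. This yields the closed form `γ = (1 - q)⁻ᵐ Fʳ f(q^(r+1)) ⋯ f(q^(r+m)) e` with
`m = 2i - 2` and `r = n² - 2i`.

Since `γ L = q^(m+2) γ`, on the right of `γ` each `f(u)` acts as a linear polynomial in `D`. The
factors at `q^r` and `q^(r+m+1)` are both proportional to `D - c`, and multiplying `γ` by them
produces `F^(n²) = 0`; hence `γ (D - c)² = 0`. For `h ≤ r` the factors of `Eʰ Fʰ` do not vanish at
`c`, so `Eʰ Fʰ` is invertible on the right of `γ`, and right multiplication by `Eʰ` is injective on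
`u γ`.
-/

namespace QFL

section RightMultiplication

theorem mul_mul_eq_of_mem_span_singleton {R : Type*} [Semiring R] {g a z x : R}
    (hz : g * a * z = g) (hx : x ∈ Submodule.span R {g}) : x * a * z = x := by
  obtain ⟨b, rfl⟩ := Submodule.mem_span_singleton.mp hx
  rw [smul_eq_mul, mul_assoc, mul_assoc, ← mul_assoc g, hz]

theorem injOn_mul_right_span_singleton {R : Type*} [Semiring R] {g a z : R}
    (hz : g * a * z = g) : Set.InjOn (· * a) (Submodule.span R {g} : Set R) := by
  intro x hx y hy (hxy : x * a = y * a)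
  rw [← mul_mul_eq_of_mem_span_singleton hz hx, ← mul_mul_eq_of_mem_span_singleton hz hy, hxy]

theorem nonempty_linearEquiv_map_of_injOn {R M N : Type*} [Semiring R] [AddCommMonoid M]
    [AddCommMonoid N] [Module R M] [Module R N] {f : M →ₗ[R] N} {p : Submodule R M}
    (hf : Set.InjOn f p) : Nonempty (p ≃ₗ[R] p.map f) :=
  ⟨(LinearEquiv.ofInjective (f.domRestrict p) hf.injective).trans
    (LinearEquiv.ofEq _ _ (LinearMap.range_domRestrict p f))⟩

open Polynomial in
theorem exists_mul_aeval_mul_eq_of_isCoprime {k A : Type*} [CommSemiring k] [Semiring A]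
    [Algebra k A] {g D : A} {f s : k[X]} (hs : g * aeval D s = 0) (hfs : IsCoprime f s) :
    ∃ w, g * aeval D f * w = g := by
  obtain ⟨a, b, hab⟩ := hfs
  refine ⟨aeval D a, ?_⟩
  calc g * aeval D f * aeval D a
      = g * aeval D (a * f) + g * aeval D s * aeval D b := by
        rw [hs, zero_mul, add_zero, mul_comm a, map_mul, mul_assoc]
    _ = g := by
        rw [mul_assoc, ← map_mul, ← mul_add, ← map_add, mul_comm s, hab, map_one, mul_one]

end RightMultiplication

section DegreeFiltration

variable {k A : Type*} [CommSemiring k] [Semiring A] [Algebra k A]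

/-- The span of the elements `Fˢ y` with `s ≤ d` and `y` in the subalgebra `B`. -/
def degreeLE (B : Subalgebra k A) (F : A) (d : ℕ) : Submodule k A :=
  Submodule.span k {x | ∃ s ≤ d, ∃ y ∈ B, x = F ^ s * y}

variable {B : Subalgebra k A} {F : A}

theorem pow_mul_mem_degreeLE {s d : ℕ} (hs : s ≤ d) {y : A} (hy : y ∈ B) :
    F ^ s * y ∈ degreeLE B F d :=
  Submodule.subset_span ⟨s, hs, y, hy, rfl⟩

theorem mul_mem_of_mem_degreeLE {N : Submodule k A} {d : ℕ} {z x : A}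
    (hz : ∀ s ≤ d, ∀ y ∈ B, z * (F ^ s * y) ∈ N) (hx : x ∈ degreeLE B F d) : z * x ∈ N := by
  have hle : degreeLE B F d ≤ N.comap (LinearMap.mulLeft k z) :=
    Submodule.span_le.mpr (by rintro _ ⟨s, hs, y, hy, rfl⟩; exact hz s hs y hy)
  exact hle hx

theorem pow_mul_mem_degreeLE_add {r d : ℕ} {x : A} (hx : x ∈ degreeLE B F d) :
    F ^ r * x ∈ degreeLE B F (r + d) :=
  mul_mem_of_mem_degreeLE (fun s hs y hy => by
    rw [← mul_assoc, ← pow_add]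
    exact pow_mul_mem_degreeLE (by omega) hy) hx

end DegreeFiltration

section QuantumTriple

open Polynomial

variable {k A : Type*} [Field k] [Ring A] [Algebra k A]

/-- Elements `L, E, F` satisfying the relations of `K⁻¹K̂, E, F` in `ũ_q(sl₂)` that do not involve
the orders of the generators. -/
structure IsQuantumTriple (q : k) (L E F : A) : Prop where
  ne_zero : q ≠ 0
  L_mul_E : L * E = (q ^ 2)⁻¹ • (E * L)
  L_mul_F : L * F = q ^ 2 • (F * L)
  F_mul_E : F * E = q⁻¹ • (E * F) + 1 - L

/-- The `q`-analogue of the Casimir element, normalized so that it commutes with `L` and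
commutes with `F` up to the scalar `q`. -/
def casimir (q : k) (L E F : A) : A := (1 - q) • (E * F) + q • (1 : A) + q ^ 2 • L

/-- The factors `f(u)` into which the elements `Eᵖ Fᵖ` and `Fᵖ Eᵖ` decompose. -/
def casimirFactor (q : k) (L E F : A) (u : k) : A :=
  u • casimir q L E F - q • (1 : A) - (q ^ 2 * u ^ 2) • L

/-- The product `f(a) f(aq) ⋯ f(aq^(p-1))`; its factors commute with each other. -/
def casimirProd (q : k) (L E F : A) (a : k) (p : ℕ) : A :=
  ((List.range p).map fun t => casimirFactor q L E F (a * q ^ t)).prod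

/-- The polynomial whose value at the Casimir element agrees with `f(u)` on a vector on which `L`
acts from the right by the scalar `μ`. -/
def factorPoly (q μ u : k) : k[X] := C u * X - C (q + q ^ 2 * u ^ 2 * μ)

variable {q : k} {L E F : A}

theorem casimirProd_zero (a : k) : casimirProd q L E F a 0 = 1 := rfl

theorem casimirProd_succ (a : k) (p : ℕ) :
    casimirProd q L E F a (p + 1) =
      casimirProd q L E F a p * casimirFactor q L E F (a * q ^ p) :=
  List.prod_range_succ _ p

theorem casimirProd_succ' (a : k) (p : ℕ) :
    casimirProd q L E F a (p + 1) =
      casimirFactor q L E F a * casimirProd q L E F (a * q) p := by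
  simp only [casimirProd, List.prod_range_succ', pow_zero, mul_one, pow_succ', mul_assoc]

theorem casimirFactor_one : casimirFactor q L E F 1 = (1 - q) • (E * F) := by
  unfold casimirFactor casimir
  match_scalars <;> ring

theorem commute_casimir_of_commute {w : A} (hEF : Commute w (E * F)) (hL : Commute w L) :
    Commute w (casimir q L E F) :=
  ((hEF.smul_right _).add_right ((Commute.one_right w).smul_right _)).add_right (hL.smul_right _)

theorem commute_casimirProd_of_commute {w : A} (hD : Commute w (casimir q L E F)) (hL : Commute w L)
    (a : k) (p : ℕ) : Commute w (casimirProd q L E F a p) := by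
  refine Commute.list_prod_right _ _ (List.forall_mem_map.mpr fun t _ => ?_)
  exact ((hD.smul_right _).sub_right ((Commute.one_right w).smul_right _)).sub_right
    (hL.smul_right _)

namespace IsQuantumTriple

variable (T : IsQuantumTriple q L E F)
include T

theorem commute_L_casimir : Commute L (casimir q L E F) := by
  have hEF : L * (E * F) = E * F * L := by
    rw [← mul_assoc, T.L_mul_E, smul_mul_assoc, mul_assoc, T.L_mul_F, mul_smul_comm,
      inv_smul_smul₀ (pow_ne_zero 2 T.ne_zero), mul_assoc]
  exact commute_casimir_of_commute hEF (Commute.refl L)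

theorem casimir_mul_F : casimir q L E F * F = q • (F * casimir q L E F) := by
  have hq := T.ne_zero
  have hFEF : F * (E * F) = q⁻¹ • (E * F * F) + F - L * F := by
    rw [← mul_assoc, T.F_mul_E, sub_mul, add_mul, smul_mul_assoc, one_mul]
  simp only [casimir, add_mul, mul_add, smul_mul_assoc, mul_smul_comm, one_mul, mul_one, hFEF,
    T.L_mul_F]
  match_scalars <;> field_simp <;> ring

theorem casimirFactor_mul_F (u : k) :
    casimirFactor q L E F u * F = F * casimirFactor q L E F (u * q) := by
  simp only [casimirFactor, sub_mul, mul_sub, smul_mul_assoc, mul_smul_comm, one_mul, mul_one,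
    T.casimir_mul_F, T.L_mul_F]
  match_scalars <;> ring

theorem casimirFactor_mul_F_pow (u : k) (r : ℕ) :
    casimirFactor q L E F u * F ^ r = F ^ r * casimirFactor q L E F (u * q ^ r) := by
  induction r with
  | zero => simp only [pow_zero, mul_one, one_mul]
  | succ r ih =>
    rw [pow_succ, ← mul_assoc, ih, mul_assoc, T.casimirFactor_mul_F, mul_assoc, mul_assoc,
      ← pow_succ]

theorem casimirProd_mul_F_pow (a : k) (p r : ℕ) :
    casimirProd q L E F a p * F ^ r = F ^ r * casimirProd q L E F (a * q ^ r) p := by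
  induction p with
  | zero => simp only [casimirProd_zero, mul_one, one_mul]
  | succ p ih =>
    rw [casimirProd_succ, casimirProd_succ, mul_assoc, T.casimirFactor_mul_F_pow, ← mul_assoc, ih,
      mul_assoc, mul_right_comm]

theorem casimirFactor_eq (u : k) :
    casimirFactor q L E F u =
      (u * q * (1 - q)) • (F * E) + (u * q ^ 2 - q) • (1 : A) + (u * q - q ^ 2 * u ^ 2) • L := by
  have hq := T.ne_zero
  rw [casimirFactor, casimir, T.F_mul_E]
  match_scalars <;> field_simp <;> ring

theorem casimirFactor_inv : casimirFactor q L E F q⁻¹ = (1 - q) • (F * E) := by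
  have hq := T.ne_zero
  rw [T.casimirFactor_eq]
  match_scalars <;> field_simp <;> ring

theorem E_pow_mul_F_pow (p : ℕ) : (1 - q) ^ p • (E ^ p * F ^ p) = casimirProd q L E F 1 p := by
  induction p with
  | zero => simp only [casimirProd_zero, pow_zero, mul_one, one_smul]
  | succ p ih =>
    calc (1 - q) ^ (p + 1) • (E ^ (p + 1) * F ^ (p + 1))
        = (1 - q) ^ p • (E ^ p * ((1 - q) • (E * F)) * F ^ p) := by
          simp only [mul_smul_comm, smul_mul_assoc, smul_smul, pow_succ E, pow_succ' F,
            pow_succ (1 - q), mul_assoc]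
      _ = (1 - q) ^ p • (E ^ p * F ^ p) * casimirFactor q L E F (1 * q ^ p) := by
          rw [← casimirFactor_one (L := L), mul_assoc, T.casimirFactor_mul_F_pow, ← mul_assoc,
            smul_mul_assoc]
      _ = casimirProd q L E F 1 (p + 1) := by rw [ih, casimirProd_succ]

theorem F_pow_mul_E_pow (p : ℕ) :
    (1 - q) ^ p • (F ^ p * E ^ p) = casimirProd q L E F (q⁻¹ ^ p) p := by
  have hq := T.ne_zero
  induction p with
  | zero => simp only [casimirProd_zero, pow_zero, mul_one, one_smul]
  | succ p ih =>
    have hcancel : q⁻¹ ^ (p + 1) * q ^ p = q⁻¹ := by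
      rw [pow_succ', mul_assoc, ← mul_pow, inv_mul_cancel₀ hq, one_pow, mul_one]
    calc (1 - q) ^ (p + 1) • (F ^ (p + 1) * E ^ (p + 1))
        = (1 - q) ^ p • (F ^ p * ((1 - q) • (F * E)) * E ^ p) := by
          simp only [mul_smul_comm, smul_mul_assoc, smul_smul, pow_succ F, pow_succ' E,
            pow_succ (1 - q), mul_assoc]
      _ = casimirFactor q L E F (q⁻¹ ^ (p + 1)) * ((1 - q) ^ p • (F ^ p * E ^ p)) := by
          rw [← T.casimirFactor_inv, mul_smul_comm, ← mul_assoc, T.casimirFactor_mul_F_pow,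
            hcancel]
      _ = casimirProd q L E F (q⁻¹ ^ (p + 1)) (p + 1) := by
          rw [ih, casimirProd_succ', pow_succ q⁻¹, inv_mul_cancel_right₀ hq]

end IsQuantumTriple

section Weight

theorem factorPoly_eq_C_mul {q μ u v : k} (huv : q * μ * u * v = 1) :
    factorPoly q μ u = C u * (X - C (q ^ 2 * μ * (u + v))) := by
  rw [factorPoly, mul_sub, ← C_mul]
  congr 2
  linear_combination (-q) * huv

theorem eval_factorPoly {q μ u v : k} (huv : q * μ * u * v = 1) (w : k) :
    (factorPoly q μ w).eval (q ^ 2 * μ * (u + v)) = -(q ^ 2 * μ * (w - u) * (w - v)) := by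
  simp only [factorPoly, eval_sub, eval_mul, eval_C, eval_X]
  linear_combination q * huv

theorem isCoprime_factorPoly_X_sub_C {q μ u v w : k} (huv : q * μ * u * v = 1)
    (hwu : w ≠ u) (hwv : w ≠ v) :
    IsCoprime (factorPoly q μ w) (X - C (q ^ 2 * μ * (u + v))) := by
  have hqμ : q * μ ≠ 0 := left_ne_zero_of_mul (left_ne_zero_of_mul_eq_one huv)
  rw [isCoprime_comm, (irreducible_X_sub_C _).coprime_iff_not_dvd, dvd_iff_isRoot, IsRoot,
    eval_factorPoly huv, neg_eq_zero]
  have hq2μ : q ^ 2 * μ ≠ 0 := by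
    rw [sq, mul_assoc]
    exact mul_ne_zero (left_ne_zero_of_mul hqμ) hqμ
  exact mul_ne_zero (mul_ne_zero hq2μ (sub_ne_zero.mpr hwu)) (sub_ne_zero.mpr hwv)

variable {μ : k} {g : A}

theorem mul_casimirFactor_of_weight (hg : g * L = μ • g) (u : k) :
    g * casimirFactor q L E F u = g * aeval (casimir q L E F) (factorPoly q μ u) := by
  simp only [casimirFactor, factorPoly, map_sub, map_mul, aeval_C, aeval_X, mul_sub,
    Algebra.algebraMap_eq_smul_one, smul_mul_assoc, mul_smul_comm, one_mul, mul_one, hg]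
  match_scalars <;> ring

theorem IsQuantumTriple.mul_casimirProd_of_weight (T : IsQuantumTriple q L E F)
    (hg : g * L = μ • g) (a : k) (p : ℕ) :
    g * casimirProd q L E F a p =
      g * aeval (casimir q L E F) (∏ t ∈ Finset.range p, factorPoly q μ (a * q ^ t)) := by
  induction p with
  | zero => simp only [casimirProd_zero, Finset.range_zero, Finset.prod_empty, map_one]
  | succ p ih =>
    have hL (f : k[X]) : Commute (aeval (casimir q L E F) f) L :=
      (Algebra.commute_of_mem_adjoin_singleton_of_commute (aeval_mem_adjoin_singleton k _)
        T.commute_L_casimir).symm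
    have hweight (f : k[X]) :
        g * aeval (casimir q L E F) f * L = μ • (g * aeval (casimir q L E F) f) := by
      rw [mul_assoc, (hL f).eq, ← mul_assoc, hg, smul_mul_assoc]
    rw [casimirProd_succ, ← mul_assoc, ih, mul_casimirFactor_of_weight (hweight _),
      Finset.prod_range_succ, map_mul, mul_assoc]

end Weight

section GammaElement

/-- An element `e` commuting with `L` and the Casimir element and satisfying `e L = μ e`; the
idempotent `e_{2i,j}` is of this kind with `μ = q^(2i)`. -/
structure IsWeightElement (q μ : k) (L E F e : A) : Prop where
  commute_casimir : Commute e (casimir q L E F)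
  commute_L : Commute e L
  mul_L : e * L = μ • e

/-- The closed form `(1 - q)⁻ᵐ Fʳ f(q^(r+1)) ⋯ f(q^(r+m)) e` of the element `γ`, with `m = 2i - 2`
and `r = n² - 2i`. -/
def gammaElement (q : k) (L E F : A) (m r : ℕ) (e : A) : A :=
  (1 - q)⁻¹ ^ m • (F ^ r * (casimirProd q L E F (q ^ (r + 1)) m * e))

variable {μ : k} {e : A} {m r : ℕ}

theorem IsWeightElement.commute_casimirProd (he : IsWeightElement q μ L E F e) (a : k) (p : ℕ) :
    Commute e (casimirProd q L E F a p) :=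
  commute_casimirProd_of_commute he.commute_casimir he.commute_L a p

theorem IsWeightElement.gammaElement_mul_L (he : IsWeightElement q μ L E F e) :
    gammaElement q L E F m r e * L = μ • gammaElement q L E F m r e := by
  simp only [gammaElement, smul_mul_assoc, mul_assoc, he.mul_L, mul_smul_comm]
  rw [smul_comm]

namespace IsQuantumTriple

variable (T : IsQuantumTriple q L E F)
include T

theorem F_mul_gammaElement (hq1 : q ≠ 1) :
    F * gammaElement q L E F m r e = E ^ m * (F ^ (m + r + 1) * e) := by
  have hmove := T.casimirProd_mul_F_pow 1 m (r + 1)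
  rw [one_mul] at hmove
  calc F * gammaElement q L E F m r e
      = (1 - q)⁻¹ ^ m • (casimirProd q L E F 1 m * F ^ (r + 1) * e) := by
        rw [gammaElement, hmove, mul_smul_comm]
        simp only [pow_succ' F, mul_assoc]
    _ = E ^ m * F ^ m * F ^ (r + 1) * e := by
        rw [← T.E_pow_mul_F_pow, smul_mul_assoc, smul_mul_assoc, inv_pow,
          inv_smul_smul₀ (pow_ne_zero m (sub_ne_zero.mpr hq1.symm))]
    _ = E ^ m * (F ^ (m + r + 1) * e) := by
        simp only [mul_assoc, pow_add]

theorem F_pow_mul_mul_casimirProd (he : IsWeightElement q μ L E F e) (a : k) :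
    F ^ r * e * casimirProd q L E F a m =
      F ^ r * e * aeval (casimir q L E F) (∏ t ∈ Finset.range m, factorPoly q μ (a * q ^ t)) := by
  refine T.mul_casimirProd_of_weight ?_ a m
  rw [mul_assoc, he.mul_L, mul_smul_comm]

theorem gammaElement_eq_mul_aeval (he : IsWeightElement q μ L E F e) :
    gammaElement q L E F m r e =
      (1 - q)⁻¹ ^ m • (F ^ r * e * aeval (casimir q L E F)
        (∏ t ∈ Finset.range m, factorPoly q μ (q ^ (r + 1) * q ^ t))) := by
  rw [gammaElement, ← T.F_pow_mul_mul_casimirProd he, ← (he.commute_casimirProd _ _).eq, mul_assoc]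

theorem F_pow_mul_mul_casimirProd_eq_zero (he : IsWeightElement q μ L E F e)
    (hq : q ^ (m + r + 2) = 1) (hF : F ^ (m + r + 2) = 0) :
    F ^ r * e * casimirProd q L E F (q ^ r) (m + 2) = 0 := by
  have hqr : q ^ r = q⁻¹ ^ (m + 2) := by
    rw [inv_pow]
    refine eq_inv_of_mul_eq_one_left ?_
    rw [← pow_add, ← hq]
    congr 1
    omega
  have hprod : F ^ r * casimirProd q L E F (q ^ r) (m + 2) = 0 := by
    rw [hqr, ← T.F_pow_mul_E_pow, mul_smul_comm, ← mul_assoc, ← pow_add, add_left_comm,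
      ← add_assoc, hF, zero_mul, smul_zero]
  rw [mul_assoc, (he.commute_casimirProd _ _).eq, ← mul_assoc, hprod, zero_mul]

theorem gammaElement_mul_aeval_sq_eq_zero (he : IsWeightElement q (q ^ (m + 2)) L E F e)
    (hq : q ^ (m + r + 2) = 1) (hF : F ^ (m + r + 2) = 0) :
    gammaElement q L E F m r e * aeval (casimir q L E F)
      ((X - C (q ^ 2 * q ^ (m + 2) * (q ^ r + q ^ (r + m + 1)))) ^ 2) = 0 := by
  set l := X - C (q ^ 2 * q ^ (m + 2) * (q ^ r + q ^ (r + m + 1)))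
  set f := ∏ t ∈ Finset.range m, factorPoly q (q ^ (m + 2)) (q ^ (r + 1) * q ^ t) with hf
  have huv : q * q ^ (m + 2) * q ^ r * q ^ (r + m + 1) = 1 := by
    linear_combination (q ^ (m + r + 2) + 1) * hq
  have hsplit : ∏ t ∈ Finset.range (m + 2), factorPoly q (q ^ (m + 2)) (q ^ r * q ^ t) =
      C (q ^ r * q ^ (r + m + 1)) * (f * l ^ 2) := by
    have hfirst : factorPoly q (q ^ (m + 2)) (q ^ r * q ^ 0) = C (q ^ r) * l := by
      rw [pow_zero, mul_one, factorPoly_eq_C_mul huv]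
    have hlast : factorPoly q (q ^ (m + 2)) (q ^ r * q ^ (m + 1)) = C (q ^ (r + m + 1)) * l := by
      rw [← pow_add, ← add_assoc, factorPoly_eq_C_mul ((mul_right_comm _ _ _).trans huv),
        add_comm (q ^ (r + m + 1))]
    have hmiddle (t : ℕ) : q ^ r * q ^ (t + 1) = q ^ (r + 1) * q ^ t := by ring
    rw [Finset.prod_range_succ, Finset.prod_range_succ', hfirst, hlast, C_mul]
    simp only [hmiddle, ← hf]
    ring
  have hzero : (q ^ r * q ^ (r + m + 1)) • (F ^ r * e * aeval (casimir q L E F) (f * l ^ 2)) =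
      0 := by
    rw [← mul_smul_comm, ← map_smul, smul_eq_C_mul, ← hsplit, ← T.F_pow_mul_mul_casimirProd he,
      T.F_pow_mul_mul_casimirProd_eq_zero he hq hF]
  have hunit : q ^ r * q ^ (r + m + 1) ≠ 0 := mul_ne_zero (pow_ne_zero _ T.ne_zero)
    (pow_ne_zero _ T.ne_zero)
  rw [T.gammaElement_eq_mul_aeval he, smul_mul_assoc, mul_assoc, ← map_mul,
    (smul_eq_zero_iff_right hunit).mp hzero, smul_zero]

theorem exists_gammaElement_mul_E_pow_mul_eq (he : IsWeightElement q (q ^ (m + 2)) L E F e)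
    (hq : IsPrimitiveRoot q (m + r + 2)) (hF : F ^ (m + r + 2) = 0) {h : ℕ} (hh : h ≤ r) :
    ∃ z, gammaElement q L E F m r e * E ^ h * z = gammaElement q L E F m r e := by
  have huv : q * q ^ (m + 2) * q ^ r * q ^ (r + m + 1) = 1 := by
    linear_combination (q ^ (m + r + 2) + 1) * hq.pow_eq_one
  have hcoprime : IsCoprime (∏ t ∈ Finset.range h, factorPoly q (q ^ (m + 2)) (1 * q ^ t))
      ((X - C (q ^ 2 * q ^ (m + 2) * (q ^ r + q ^ (r + m + 1)))) ^ 2) := by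
    refine IsCoprime.prod_left fun t ht => IsCoprime.pow_right ?_
    have htr : t < r := (Finset.mem_range.mp ht).trans_le hh
    rw [one_mul]
    exact isCoprime_factorPoly_X_sub_C huv
      (fun heq => htr.ne (hq.pow_inj (by omega) (by omega) heq))
      (fun heq => (by omega : t ≠ r + m + 1) (hq.pow_inj (by omega) (by omega) heq))
  obtain ⟨w, hw⟩ := exists_mul_aeval_mul_eq_of_isCoprime
    (T.gammaElement_mul_aeval_sq_eq_zero he hq.pow_eq_one hF) hcoprime
  refine ⟨(1 - q) ^ h • (F ^ h * w), ?_⟩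
  rw [← T.mul_casimirProd_of_weight he.gammaElement_mul_L, ← T.E_pow_mul_F_pow] at hw
  simpa only [mul_smul_comm, smul_mul_assoc, mul_assoc] using hw

end IsQuantumTriple

end GammaElement

section GammaElementDegree

variable {B : Subalgebra k A}

namespace IsQuantumTriple

variable (T : IsQuantumTriple q L E F) (hL : L ∈ B) (hE : E ∈ B)
include T hL hE

theorem casimirFactor_mul_mem_degreeLE (u : k) {d : ℕ} {x : A} (hx : x ∈ degreeLE B F d) :
    casimirFactor q L E F u * x ∈ degreeLE B F (d + 1) := by
  refine mul_mem_of_mem_degreeLE (fun s hs y hy => ?_) hx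
  rw [← mul_assoc, T.casimirFactor_mul_F_pow, T.casimirFactor_eq, mul_assoc]
  simp only [add_mul, mul_add, smul_mul_assoc, mul_smul_comm, one_mul]
  refine add_mem (add_mem (Submodule.smul_mem _ _ ?_) (Submodule.smul_mem _ _ ?_))
    (Submodule.smul_mem _ _ ?_)
  · rw [mul_assoc, ← mul_assoc, ← pow_succ]
    exact pow_mul_mem_degreeLE (by omega) (B.mul_mem hE hy)
  · exact pow_mul_mem_degreeLE (by omega) hy
  · exact pow_mul_mem_degreeLE (by omega) (B.mul_mem hL hy)

theorem casimirProd_mul_mem_degreeLE {y : A} (hy : y ∈ B) (a : k) (p : ℕ) :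
    casimirProd q L E F a p * y ∈ degreeLE B F p := by
  induction p generalizing a with
  | zero =>
    rw [casimirProd_zero, ← pow_zero F]
    exact pow_mul_mem_degreeLE le_rfl hy
  | succ p ih =>
    rw [casimirProd_succ', mul_assoc]
    exact T.casimirFactor_mul_mem_degreeLE hL hE a (ih _)

theorem gammaElement_mem_degreeLE {e : A} (he : e ∈ B) (m r : ℕ) :
    gammaElement q L E F m r e ∈ degreeLE B F (r + m) :=
  Submodule.smul_mem _ _
    (pow_mul_mem_degreeLE_add (T.casimirProd_mul_mem_degreeLE hL hE he _ m))

end IsQuantumTriple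

end GammaElementDegree

end QuantumTriple

section SmallQuantumGroup

section QCommutation

variable {k A : Type*} [CommSemiring k] [Semiring A] [Algebra k A] {x y : A} {s : k}

theorem mul_eq_smul_mul_of_conj {z : A} (hzx : z * x = 1) (h : x * y * z = s • y) :
    x * y = s • (y * x) := by
  rw [← smul_mul_assoc, ← h, mul_assoc, hzx, mul_one]

theorem pow_mul_eq_smul_mul_pow (h : x * y = s • (y * x)) (a : ℕ) :
    x ^ a * y = s ^ a • (y * x ^ a) := by
  induction a with
  | zero => simp only [pow_zero, one_mul, mul_one, one_smul]
  | succ a ih =>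
    rw [pow_succ', mul_assoc, ih, mul_smul_comm, ← mul_assoc, h, smul_mul_assoc, smul_smul,
      pow_succ, mul_assoc]

end QCommutation

theorem geom_sum_smul_pow_mul {k A : Type*} [Field k] [Ring A] [Algebra k A] {L : A} {μ : k}
    {M : ℕ} (hμ0 : μ ≠ 0) (hμ : μ ^ M = 1) (hL : L ^ M = 1) :
    (∑ t ∈ Finset.range M, μ⁻¹ ^ t • L ^ t) * L = μ • ∑ t ∈ Finset.range M, μ⁻¹ ^ t • L ^ t := by
  have htelescope := geom_sum_mul (μ⁻¹ • L) M
  rw [smul_pow, hL, inv_pow, hμ, inv_one, one_smul, sub_self, mul_sub, mul_one, sub_eq_zero,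
    mul_smul_comm, inv_smul_eq_iff₀ hμ0] at htelescope
  simpa only [smul_pow] using htelescope

variable {k : Type} [Field k] {n : ℕ} {q : k}

theorem K_pow_n : K k n q ^ n = 1 := by
  simpa only [map_pow, map_one, K] using RingQuot.mkAlgHom_rel k (Rel.Kord (k := k) (q := q))

theorem Kh_pow_n : Kh k n q ^ n = Kinv k n q ^ 2 := by
  simpa only [map_pow, Kh, Kinv, K] using RingQuot.mkAlgHom_rel k (Rel.Khord (k := k) (q := q))

theorem commute_K_Kh : Commute (K k n q) (Kh k n q) := by
  simpa only [map_mul, Commute, SemiconjBy, K, Kh] using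
    RingQuot.mkAlgHom_rel k (Rel.KKh (k := k) (q := q))

theorem E_pow_sq : E k n q ^ n ^ 2 = 0 := by
  simpa only [map_pow, map_zero, E] using RingQuot.mkAlgHom_rel k (Rel.Enil (k := k) (q := q))

theorem F_pow_sq : F k n q ^ n ^ 2 = 0 := by
  simpa only [map_pow, map_zero, F] using RingQuot.mkAlgHom_rel k (Rel.Fnil (k := k) (q := q))

theorem Kinv_pow_n : Kinv k n q ^ n = 1 := by
  rw [Kinv, ← pow_mul, mul_comm, pow_mul, K_pow_n, one_pow]

theorem Kh_pow_sq : Kh k n q ^ n ^ 2 = 1 := by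
  rw [sq, pow_mul, Kh_pow_n, ← pow_mul, mul_comm, pow_mul, Kinv_pow_n, one_pow]

theorem Kinv_mul_K (hn : 0 < n) : Kinv k n q * K k n q = 1 := by
  rw [Kinv, ← pow_succ, Nat.sub_add_cancel hn, K_pow_n]

theorem Khinv_mul_Kh (hn : 0 < n) : Khinv k n q * Kh k n q = 1 := by
  rw [Khinv, ← pow_succ, Nat.sub_add_cancel (pow_pos hn 2), Kh_pow_sq]

theorem K_mul_E (hn : 0 < n) : K k n q * E k n q = q ^ n • (E k n q * K k n q) :=
  mul_eq_smul_mul_of_conj (Kinv_mul_K hn) <| by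
    simpa only [map_mul, map_pow, map_smul, Kinv, K, E] using
      RingQuot.mkAlgHom_rel k (Rel.KE (k := k) (q := q))

theorem K_mul_F (hn : 0 < n) : K k n q * F k n q = (q ^ n)⁻¹ • (F k n q * K k n q) :=
  mul_eq_smul_mul_of_conj (Kinv_mul_K hn) <| by
    simpa only [map_mul, map_pow, map_smul, Kinv, K, F] using
      RingQuot.mkAlgHom_rel k (Rel.KF (k := k) (q := q))

theorem Kh_mul_E (hn : 0 < n) :
    Kh k n q * E k n q = (q ^ n * (q ^ 2)⁻¹) • (E k n q * Kh k n q) :=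
  mul_eq_smul_mul_of_conj (Khinv_mul_Kh hn) <| by
    simpa only [map_mul, map_pow, map_smul, Khinv, Kh, E] using
      RingQuot.mkAlgHom_rel k (Rel.KhE (k := k) (q := q))

theorem Kh_mul_F (hn : 0 < n) :
    Kh k n q * F k n q = ((q ^ n)⁻¹ * q ^ 2) • (F k n q * Kh k n q) :=
  mul_eq_smul_mul_of_conj (Khinv_mul_Kh hn) <| by
    simpa only [map_mul, map_pow, map_smul, Khinv, Kh, F] using
      RingQuot.mkAlgHom_rel k (Rel.KhF (k := k) (q := q))

theorem F_mul_E :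
    F k n q * E k n q = q⁻¹ • (E k n q * F k n q) + 1 - Kinv k n q * Kh k n q := by
  have hrel : F k n q * E k n q - q⁻¹ • (E k n q * F k n q) = 1 - Kinv k n q * Kh k n q := by
    simpa only [map_sub, map_mul, map_pow, map_smul, map_one, Kinv, K, Kh, E, F] using
      RingQuot.mkAlgHom_rel k (Rel.EF (k := k) (n := n) (q := q))
  rw [add_sub_assoc, ← hrel, add_sub_cancel]

theorem isQuantumTriple (hn : 0 < n) (hqn : q ^ n ^ 2 = 1) :
    IsQuantumTriple q (Kinv k n q * Kh k n q) (E k n q) (F k n q) := by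
  have hq0 : q ≠ 0 := by
    rintro rfl
    exact zero_ne_one ((zero_pow (pow_pos hn 2).ne').symm.trans hqn)
  have hKE := K_mul_E (k := k) (q := q) hn
  have hKF := K_mul_F (k := k) (q := q) hn
  have hqbar : (q ^ n) ^ (n - 1) * q ^ n = 1 := by
    rw [← pow_succ, Nat.sub_add_cancel hn, ← pow_mul, ← sq, hqn]
  refine ⟨hq0, ?_, ?_, F_mul_E⟩
  · rw [mul_assoc, Kh_mul_E hn, mul_smul_comm, ← mul_assoc, Kinv,
      pow_mul_eq_smul_mul_pow hKE, smul_mul_assoc, smul_smul, mul_assoc (E k n q)]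
    congr 1
    linear_combination (q ^ 2)⁻¹ * hqbar
  · have hqbar_inv : (q ^ n)⁻¹ ^ (n - 1) * (q ^ n)⁻¹ = 1 := by
      rw [inv_pow, ← mul_inv, hqbar, inv_one]
    rw [mul_assoc, Kh_mul_F hn, mul_smul_comm, ← mul_assoc, Kinv,
      pow_mul_eq_smul_mul_pow hKF, smul_mul_assoc, smul_smul, mul_assoc (F k n q)]
    congr 1
    linear_combination q ^ 2 * hqbar_inv

variable (k n q) in
/-- The subalgebra generated by the group-like elements `K` and `K̂`. -/
def torus : Subalgebra k (U k n q) := Algebra.adjoin k {K k n q, Kh k n q}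

variable (k n q) in
/-- The positive Borel subalgebra, generated by `K`, `K̂` and `E`. -/
def borel : Subalgebra k (U k n q) := Algebra.adjoin k {K k n q, Kh k n q, E k n q}

theorem torus_le_borel : torus k n q ≤ borel k n q :=
  Algebra.adjoin_mono (Set.insert_subset_insert (Set.singleton_subset_iff.mpr (Or.inl rfl)))

theorem E_mem_borel : E k n q ∈ borel k n q :=
  Algebra.subset_adjoin (Or.inr (Or.inr rfl))

theorem K_mem_torus : K k n q ∈ torus k n q := Algebra.subset_adjoin (Or.inl rfl)

theorem Kh_mem_torus : Kh k n q ∈ torus k n q := Algebra.subset_adjoin (Or.inr rfl)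

theorem Kinv_mul_Kh_mem_torus : Kinv k n q * Kh k n q ∈ torus k n q :=
  mul_mem (pow_mem K_mem_torus _) Kh_mem_torus

theorem phi_mem_torus (i : ℕ) : phi k n q i ∈ torus k n q :=
  Subalgebra.smul_mem _ (sum_mem fun _ _ =>
    Subalgebra.smul_mem _ (pow_mem Kinv_mul_Kh_mem_torus _) _) _

theorem oneJ_mem_torus (j : ℕ) : oneJ k n q j ∈ torus k n q := by
  have hmul : K k n q * Kh k n q ^ (n / 2) ∈ torus k n q :=
    mul_mem K_mem_torus (pow_mem Kh_mem_torus _)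
  unfold oneJ
  split_ifs
  · exact Subalgebra.smul_mem _ (add_mem (one_mem _) hmul) _
  · exact Subalgebra.smul_mem _ (sub_mem (one_mem _) hmul) _

theorem eIdem_mem_torus (i j : ℕ) : eIdem k n q i j ∈ torus k n q :=
  mul_mem (phi_mem_torus i) (oneJ_mem_torus j)

theorem commute_of_mem_torus {w x : U k n q} (hK : Commute w (K k n q))
    (hKh : Commute w (Kh k n q)) (hx : x ∈ torus k n q) : Commute w x :=
  Algebra.commute_of_mem_adjoin_of_forall_mem_commute hx (by rintro _ (rfl | rfl) <;> assumption)

theorem commute_of_mem_torus_of_mem_torus {x y : U k n q} (hx : x ∈ torus k n q)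
    (hy : y ∈ torus k n q) : Commute x y :=
  commute_of_mem_torus
    (commute_of_mem_torus (Commute.refl _) commute_K_Kh hx).symm
    (commute_of_mem_torus commute_K_Kh.symm (Commute.refl _) hx).symm hy

theorem commute_E_mul_F_of_mem_torus (hn : 0 < n) (hq0 : q ≠ 0) {x : U k n q}
    (hx : x ∈ torus k n q) : Commute (E k n q * F k n q) x := by
  refine commute_of_mem_torus (Commute.symm ?_) (Commute.symm ?_) hx
  · change K k n q * (E k n q * F k n q) = E k n q * F k n q * K k n q
    rw [← mul_assoc, K_mul_E hn, smul_mul_assoc, mul_assoc, K_mul_F hn, mul_smul_comm,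
      smul_inv_smul₀ (pow_ne_zero n hq0), mul_assoc]
  · change Kh k n q * (E k n q * F k n q) = E k n q * F k n q * Kh k n q
    have hcancel : q ^ n * (q ^ 2)⁻¹ * ((q ^ n)⁻¹ * q ^ 2) = 1 := by field_simp
    rw [← mul_assoc, Kh_mul_E hn, smul_mul_assoc, mul_assoc, Kh_mul_F hn, mul_smul_comm, smul_smul,
      hcancel, one_smul, mul_assoc]

theorem Kinv_mul_Kh_pow (hn : Even n) : (Kinv k n q * Kh k n q) ^ (n ^ 2 / 2) = 1 := by
  obtain ⟨p, rfl⟩ := hn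
  have hhalf : (p + p) ^ 2 / 2 = (p + p) * p := by
    rw [show (p + p) ^ 2 = 2 * ((p + p) * p) by ring, Nat.mul_div_cancel_left _ two_pos]
  have hcomm : Commute (Kinv k (p + p) q) (Kh k (p + p) q) := commute_K_Kh.pow_left _
  rw [hhalf, pow_mul, hcomm.mul_pow, Kinv_pow_n, Kh_pow_n, one_mul, ← pow_mul, two_mul, Kinv_pow_n]

theorem phi_mul_Kinv_mul_Kh (hn0 : 0 < n) (hn : Even n) (hqn : q ^ n ^ 2 = 1) (i : ℕ) :
    phi k n q i * (Kinv k n q * Kh k n q) = q ^ (2 * i) • phi k n q i := by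
  have hq0 := (isQuantumTriple hn0 hqn).ne_zero
  have hroot : (q ^ (2 * i)) ^ (n ^ 2 / 2) = 1 := by
    have hhalf : 2 * (n ^ 2 / 2) = n ^ 2 :=
      Nat.two_mul_div_two_of_even (hn.pow_of_ne_zero two_ne_zero)
    rw [← pow_mul, mul_right_comm, hhalf, pow_mul, hqn, one_pow]
  have hL : (Kinv k n q * Kh k n q) ^ (n ^ 2 / 2) = 1 := Kinv_mul_Kh_pow hn
  have hsum := geom_sum_smul_pow_mul (pow_ne_zero (2 * i) hq0) hroot hL
  simp only [← inv_pow, ← pow_mul] at hsum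
  rw [phi, smul_mul_assoc, hsum, smul_comm]

theorem isWeightElement_eIdem (hn0 : 0 < n) (hn : Even n) (hqn : q ^ n ^ 2 = 1) (i j : ℕ) :
    IsWeightElement q (q ^ (2 * i)) (Kinv k n q * Kh k n q) (E k n q) (F k n q)
      (eIdem k n q i j) where
  commute_casimir :=
    commute_casimir_of_commute
      (commute_E_mul_F_of_mem_torus hn0 (isQuantumTriple hn0 hqn).ne_zero
        (eIdem_mem_torus i j)).symm
      (commute_of_mem_torus_of_mem_torus (eIdem_mem_torus i j) Kinv_mul_Kh_mem_torus)
  commute_L := commute_of_mem_torus_of_mem_torus (eIdem_mem_torus i j) Kinv_mul_Kh_mem_torus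
  mul_L := by
    rw [eIdem, mul_assoc, (commute_of_mem_torus_of_mem_torus (oneJ_mem_torus j)
      Kinv_mul_Kh_mem_torus).eq, ← mul_assoc, phi_mul_Kinv_mul_Kh hn0 hn hqn, smul_mul_assoc]

theorem borel_le_span_monomials (hn : 0 < n) (hq0 : q ≠ 0) :
    Subalgebra.toSubmodule (borel k n q) ≤
      Submodule.span k {x | ∃ c d b : ℕ, x = K k n q ^ c * Kh k n q ^ d * E k n q ^ b} := by
  have hEK : E k n q * K k n q = (q ^ n)⁻¹ • (K k n q * E k n q) := by
    rw [K_mul_E hn, inv_smul_smul₀ (pow_ne_zero n hq0)]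
  have hEKh : E k n q * Kh k n q = (q ^ n * (q ^ 2)⁻¹)⁻¹ • (Kh k n q * E k n q) := by
    rw [Kh_mul_E hn, inv_smul_smul₀ (mul_ne_zero (pow_ne_zero n hq0)
      (inv_ne_zero (pow_ne_zero 2 hq0)))]
  rw [borel, Algebra.adjoin_eq_span, Submodule.span_le]
  have hmonomial (x : U k n q) (hx : x ∈ Submonoid.closure {K k n q, Kh k n q, E k n q}) :
      ∃ (s : k) (c d b : ℕ), x = s • (K k n q ^ c * Kh k n q ^ d * E k n q ^ b) := by
    induction hx using Submonoid.closure_induction_right with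
    | one => exact ⟨1, 0, 0, 0, by simp only [pow_zero, mul_one, one_smul]⟩
    | mul_right x _ y hy ih =>
      obtain ⟨s, c, d, b, rfl⟩ := ih
      obtain rfl | rfl | rfl := hy
      · refine ⟨s * (q ^ n)⁻¹ ^ b, c + 1, d, b, ?_⟩
        rw [smul_mul_assoc, mul_assoc, pow_mul_eq_smul_mul_pow hEK, mul_smul_comm, smul_smul,
          mul_assoc (K k n q ^ c), ← mul_assoc (Kh k n q ^ d), ← (commute_K_Kh.pow_right d).eq]
        simp only [pow_succ, mul_assoc]
      · refine ⟨s * (q ^ n * (q ^ 2)⁻¹)⁻¹ ^ b, c, d + 1, b, ?_⟩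
        rw [smul_mul_assoc, mul_assoc, pow_mul_eq_smul_mul_pow hEKh, mul_smul_comm, smul_smul]
        simp only [pow_succ, mul_assoc]
      · exact ⟨s, c, d, b + 1, by rw [smul_mul_assoc, pow_succ, mul_assoc _ _ (E k n q)]⟩
  intro x hx
  obtain ⟨s, c, d, b, rfl⟩ := hmonomial x hx
  exact Submodule.smul_mem _ s (Submodule.subset_span ⟨c, d, b, rfl⟩)

theorem monomial_mem_pbw (hn : 0 < n) {a : ℕ} (ha : a ≤ n ^ 2 - 2) (b c d : ℕ) :
    F k n q ^ a * (K k n q ^ c * Kh k n q ^ d * E k n q ^ b) ∈ pbw k n q := by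
  by_cases hb : b ≤ n ^ 2 - 1
  · refine Submodule.subset_span ⟨a, b, c % n, d % n ^ 2, ha, hb,
      Nat.le_pred_of_lt (Nat.mod_lt c hn), Nat.le_pred_of_lt (Nat.mod_lt d (pow_pos hn 2)), ?_⟩
    rw [← pow_eq_pow_mod c K_pow_n, ← pow_eq_pow_mod d Kh_pow_sq]
    simp only [mul_assoc]
  · rw [pow_eq_zero_of_le (by omega) E_pow_sq, mul_zero, mul_zero]
    exact zero_mem _

theorem degreeLE_borel_le_pbw (hn : 0 < n) (hq0 : q ≠ 0) :
    degreeLE (borel k n q) (F k n q) (n ^ 2 - 2) ≤ pbw k n q := by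
  refine Submodule.span_le.mpr ?_
  rintro _ ⟨a, ha, y, hy, rfl⟩
  have hspan : Submodule.span k {x | ∃ c d b : ℕ, x = K k n q ^ c * Kh k n q ^ d * E k n q ^ b} ≤
      (pbw k n q).comap (LinearMap.mulLeft k (F k n q ^ a)) :=
    Submodule.span_le.mpr (by rintro _ ⟨c, d, b, rfl⟩; exact monomial_mem_pbw hn ha b c d)
  exact hspan (borel_le_span_monomials hn hq0 hy)

-- The case `gam = 0` is the junk value of `gam` when `F x = β` is not uniquely solvable in `pbw`.
theorem gam_eq_zero_or_eq_gammaElement (hn : 0 < n) (hq : IsPrimitiveRoot q (n ^ 2)) {i j m r : ℕ}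
    (hi : 2 * i = m + 2) (hmr : m + r + 2 = n ^ 2) :
    gam k n q i j = 0 ∨ gam k n q i j =
      gammaElement q (Kinv k n q * Kh k n q) (E k n q) (F k n q) m r (eIdem k n q i j) := by
  by_cases hex : ∃! x, x ∈ pbw k n q ∧ F k n q * x = beta k n q i j
  · right
    rw [gam, dif_pos hex]
    refine hex.unique hex.choose_spec.1 ⟨?_, ?_⟩
    · have T := isQuantumTriple hn hq.pow_eq_one
      have hdeg := T.gammaElement_mem_degreeLE (torus_le_borel Kinv_mul_Kh_mem_torus) E_mem_borel
        (torus_le_borel (eIdem_mem_torus i j)) m r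
      rw [show r + m = n ^ 2 - 2 by omega] at hdeg
      exact degreeLE_borel_le_pbw hn T.ne_zero hdeg
    · rw [(isQuantumTriple hn hq.pow_eq_one).F_mul_gammaElement (hq.ne_one (by omega)), beta, alpha,
        show 2 * i - 2 = m by omega, show n ^ 2 - 1 = m + r + 1 by omega]
  · exact Or.inl (dif_neg hex)

theorem exists_gam_mul_E_pow_mul_eq_gam (hn0 : 0 < n) (hn : Even n)
    (hq : IsPrimitiveRoot q (n ^ 2)) {i : ℕ} (j : ℕ) {h : ℕ} (hi : 1 ≤ i) (hi' : i ≤ n ^ 2 / 2)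
    (hh : h ≤ n ^ 2 - 2 * i) :
    ∃ z, gam k n q i j * E k n q ^ h * z = gam k n q i j := by
  obtain ⟨m, hm⟩ : ∃ m, 2 * i = m + 2 := ⟨2 * i - 2, by omega⟩
  obtain ⟨r, hr⟩ : ∃ r, m + r + 2 = n ^ 2 := ⟨n ^ 2 - 2 * i, by omega⟩
  obtain hgam | hgam := gam_eq_zero_or_eq_gammaElement (j := j) hn0 hq hm hr
  · exact ⟨0, by rw [hgam, mul_zero]⟩
  · rw [hgam]
    refine (isQuantumTriple hn0 hq.pow_eq_one).exists_gammaElement_mul_E_pow_mul_eq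
      (hm ▸ isWeightElement_eIdem hn0 hn hq.pow_eq_one i j) (hr ▸ hq) (hr ▸ F_pow_sq) (by omega)

end SmallQuantumGroup

end QFL

open QFL in
theorem statement7_general (k : Type) [Field k] (n : ℕ) (hn : 0 < n) (h2 : Even n) (q : k)
    (hq : IsPrimitiveRoot q (n ^ 2)) (i : ℕ) (j : Fin 2) (h : ℕ) (hi : 1 ≤ i)
    (hi' : i ≤ n ^ 2 / 2) (hh : h ≤ n ^ 2 - 2 * i) :
    (∀ x ∈ P k n q i j, ∀ y ∈ P k n q i j,
        x * E k n q ^ h = y * E k n q ^ h → x = y) ∧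
      Nonempty ((P k n q i j) ≃ₗ[U k n q]
        (Submodule.map (LinearMap.toSpanSingleton (U k n q) (U k n q) (E k n q ^ h))
          (P k n q i j))) := by
  obtain ⟨z, hz⟩ := exists_gam_mul_E_pow_mul_eq_gam hn h2 hq j hi hi' hh
  have hinj : Set.InjOn (· * E k n q ^ h) (P k n q i j : Set (U k n q)) :=
    injOn_mul_right_span_singleton hz
  exact ⟨fun x hx y hy hxy => hinj hx hy hxy, nonempty_linearEquiv_map_of_injOn hinj⟩

open QFL in
/-- Corollary 2.11: right multiplication by `E^h` is injective on `P_{2i,j}` and gives an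
isomorphism of left `u`-modules `P_{2i,j} ≅ P_{2i,j}E^h` for `0 ≤ h ≤ n²-2i`. -/
theorem statement7 (k : Type) [Field k] [IsAlgClosed k] [CharZero k]
    (n : ℕ) (hn : 0 < n) (h4 : 4 ∣ n) (q : k) (hq : IsPrimitiveRoot q (n ^ 2)) :
    ∀ i j h : ℕ, 1 ≤ i → i ≤ n ^ 2 / 2 → j ≤ 1 → h ≤ n ^ 2 - 2 * i →
      (∀ x ∈ P k n q i j, ∀ y ∈ P k n q i j,
        x * E k n q ^ h = y * E k n q ^ h → x = y) ∧
      Nonempty ((P k n q i j) ≃ₗ[U k n q]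
        (Submodule.map (LinearMap.toSpanSingleton (U k n q) (U k n q) (E k n q ^ h))
          (P k n q i j))) := by
  intro i j h hi hi' hj hh
  exact statement7_general k n hn (even_iff_two_dvd.mpr (dvd_trans (by decide) h4)) q hq i
    ⟨j, Nat.lt_succ_of_le hj⟩ h hi hi' hh
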